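/- Let S^{2,1}_{10} be the simplicial complex on vertex set ℤ/10ℤ whose facets are the thirty 4-element subsets {i, i+1, i+2, i+4}, {i, i+1, i+3, i+4}, {i, i+2, i+3, i+4}, for i ∈ ℤ/10ℤ (arithmetic mod 10). Then every 3-element subset of ℤ/10ℤ that is contained in some facet of S^{2,1}_{10} is contained in exactly two facets of S^{2,1}_{10} (i.e. Walkup's complex S^{2,1}_{10} is a closed 3-pseudomanifold). -/

import Mathlib

/-- The facets of Walkup's 10-vertex triangulation `S^{2,1}_{10}` of `S² × S¹`: the thirty
4-element subsets `{i, i+1, i+2, i+4}`, `{i, i+1, i+3, i+4}`, `{i, i+2, i+3, i+4}` of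
`ℤ/10ℤ`. -/
def walkupComplex : Finset (Finset (ZMod 10)) :=
  Finset.univ.image (fun i : ZMod 10 => {i, i + 1, i + 2, i + 4}) ∪
  Finset.univ.image (fun i : ZMod 10 => {i, i + 1, i + 3, i + 4}) ∪
  Finset.univ.image (fun i : ZMod 10 => {i, i + 2, i + 3, i + 4})

/-!
The cyclic group `ℤ/10ℤ` acts on the complex by translation, and the number of facets through a
triangle is constant on orbits. The three orbits of facets are represented by `{0, 1, 2, 4}`,
`{0, 1, 3, 4}` and `{0, 2, 3, 4}`, whose triangles fall into the six orbits of `{0, a, b}` with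
`0 < a < b ≤ 4`. It remains to exhibit the two facets through each of these six triangles.
-/

open scoped Pointwise

section GroupAction

variable {G α : Type*} [Group G] [MulAction G α] [DecidableEq α]

/-- The members of the family `K` of facets that contain the face `t`. -/
def facetsContaining (K : Finset (Finset α)) (t : Finset α) : Finset (Finset α) :=
  K.filter (t ⊆ ·)

@[to_additive]
theorem facetsContaining_smul (g : G) (K : Finset (Finset α)) (t : Finset α) :
    facetsContaining (g • K) (g • t) = g • facetsContaining K t := by
  ext s
  simp only [facetsContaining, Finset.mem_filter, ← Finset.inv_smul_mem_iff,
    Finset.smul_finset_subset_iff]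

@[to_additive]
theorem card_facetsContaining_smul {g : G} {K : Finset (Finset α)} (hK : g • K = K)
    (t : Finset α) : (facetsContaining K (g • t)).card = (facetsContaining K t).card := by
  rw [← Finset.card_smul_finset g (facetsContaining K t), ← facetsContaining_smul, hK]

@[to_additive]
theorem smul_univ_smul [Fintype G] (g : G) (A : Finset α) :
    g • ((Finset.univ : Finset G) • A) = (Finset.univ : Finset G) • A := by
  classical
  rw [← smul_assoc, Finset.smul_finset_univ]

end GroupAction

/-- Representatives of the three orbits of facets under translation by `ℤ/10ℤ`: the facets with
`i = 0`. -/
def walkupBaseFacets : Finset (Finset (ZMod 10)) :=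
  {{0, 1, 2, 4}, {0, 1, 3, 4}, {0, 2, 3, 4}}

/-- Representatives of the six orbits of triangles under translation by `ℤ/10ℤ`: the sets
`{0, a, b}` with `0 < a < b ≤ 4`. -/
def walkupBaseTriangles : Finset (Finset (ZMod 10)) :=
  {{0, 1, 2}, {0, 1, 3}, {0, 1, 4}, {0, 2, 3}, {0, 2, 4}, {0, 3, 4}}

theorem walkupComplex_eq_univ_vadd :
    walkupComplex = (Finset.univ : Finset (ZMod 10)) +ᵥ walkupBaseFacets := by
  ext s
  simp [walkupComplex, walkupBaseFacets, Finset.mem_vadd, Finset.vadd_finset_insert, exists_or]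

theorem vadd_walkupComplex (i : ZMod 10) : i +ᵥ walkupComplex = walkupComplex := by
  rw [walkupComplex_eq_univ_vadd, vadd_univ_vadd]

theorem powersetCard_three_subset_vadd_walkupBaseTriangles :
    ∀ b ∈ walkupBaseFacets,
      b.powersetCard 3 ⊆ ({0, 1, 2} : Finset (ZMod 10)) +ᵥ walkupBaseTriangles := by
  decide +kernel

theorem exists_vadd_eq_of_subset_facet {s t : Finset (ZMod 10)} (hs : s ∈ walkupComplex)
    (hts : t ⊆ s) (ht : t.card = 3) :
    ∃ i : ZMod 10, ∃ r ∈ walkupBaseTriangles, i +ᵥ r = t := by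
  rw [walkupComplex_eq_univ_vadd] at hs
  obtain ⟨i, -, b, hb, rfl⟩ := Finset.mem_vadd.1 hs
  have hmem : -i +ᵥ t ∈ b.powersetCard 3 := by
    rw [Finset.mem_powersetCard, Finset.card_vadd_finset, ← Finset.subset_vadd_finset_iff]
    exact ⟨hts, ht⟩
  obtain ⟨j, -, r, hr, hjr⟩ :=
    Finset.mem_vadd.1 (powersetCard_three_subset_vadd_walkupBaseTriangles b hb hmem)
  exact ⟨i + j, r, hr, by rw [add_vadd, hjr, vadd_neg_vadd]⟩

theorem facetsContaining_zero_one_two :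
    facetsContaining walkupComplex {0, 1, 2} = {{0, 1, 2, 4}, {8, 0, 1, 2}} := by
  decide

theorem facetsContaining_zero_one_three :
    facetsContaining walkupComplex {0, 1, 3} = {{9, 0, 1, 3}, {0, 1, 3, 4}} := by
  decide

theorem facetsContaining_zero_one_four :
    facetsContaining walkupComplex {0, 1, 4} = {{0, 1, 2, 4}, {0, 1, 3, 4}} := by
  decide

theorem facetsContaining_zero_two_three :
    facetsContaining walkupComplex {0, 2, 3} = {{9, 0, 2, 3}, {0, 2, 3, 4}} := by
  decide

theorem facetsContaining_zero_two_four :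
    facetsContaining walkupComplex {0, 2, 4} = {{0, 1, 2, 4}, {0, 2, 3, 4}} := by
  decide

theorem facetsContaining_zero_three_four :
    facetsContaining walkupComplex {0, 3, 4} = {{0, 1, 3, 4}, {0, 2, 3, 4}} := by
  decide

theorem card_facetsContaining_walkupBaseTriangle {r : Finset (ZMod 10)}
    (hr : r ∈ walkupBaseTriangles) : (facetsContaining walkupComplex r).card = 2 := by
  simp only [walkupBaseTriangles, Finset.mem_insert, Finset.mem_singleton] at hr
  rcases hr with rfl | rfl | rfl | rfl | rfl | rfl
  · rw [facetsContaining_zero_one_two]; decide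
  · rw [facetsContaining_zero_one_three]; decide
  · rw [facetsContaining_zero_one_four]; decide
  · rw [facetsContaining_zero_two_three]; decide
  · rw [facetsContaining_zero_two_four]; decide
  · rw [facetsContaining_zero_three_four]; decide

/-- Every 3-element subset of `ℤ/10ℤ` contained in some facet of Walkup's complex
`S^{2,1}_{10}` is contained in exactly two facets: `S^{2,1}_{10}` is a closed
3-pseudomanifold. -/
theorem walkup_is_pseudomanifold :
    ∀ t : Finset (ZMod 10), t.card = 3 → (∃ s ∈ walkupComplex, t ⊆ s) →
      (walkupComplex.filter (fun s => t ⊆ s)).card = 2 := by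
  rintro t ht ⟨s, hs, hts⟩
  obtain ⟨i, r, hr, rfl⟩ := exists_vadd_eq_of_subset_facet hs hts ht
  calc (facetsContaining walkupComplex (i +ᵥ r)).card
      = (facetsContaining walkupComplex r).card :=
        card_facetsContaining_vadd (vadd_walkupComplex i) r
    _ = 2 := card_facetsContaining_walkupBaseTriangle hr
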